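/- arXiv:2505.06143 — 2 statements merged into one kernel-verified Lean document; each statement's English description precedes it below -/
import Mathlib

section
/- Let λ_1, …, λ_N be distinct real numbers, T > 0, and let F_1^T ⊂ L²(0,T) be the linear span of the functions t ↦ S(T−t, λ_k), k = 1, …, N. Then F_1^T has dimension N and the linear map Φ : F_1^T → ℝ^N defined by Φ(f) = (∫_0^T f(τ) S(T−τ, λ_1) dτ, …, ∫_0^T f(τ) S(T−τ, λ_N) dτ) is a bijection. Consequently, for an N×N Jacobi matrix A with spectral data (λ_k, φ_k, ρ_k) as in the context, for every a ∈ ℝ^N there exists a unique f ∈ F_1^T with u^f(T) = a, i.e. the control operator W^T maps F_1^T onto ℝ^N isomorphically. -/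
open MeasureTheory Real Matrix

/-- `S t λ` solves `S'' = -λ S`, `S 0 = 0`, `S' 0 = 1`. -/
noncomputable def S (t lam : ℝ) : ℝ :=
  if 0 < lam then Real.sin (Real.sqrt lam * t) / Real.sqrt lam
  else if lam < 0 then Real.sinh (Real.sqrt (-lam) * t) / Real.sqrt (-lam)
  else t

/-- An `N × N` Jacobi matrix: real symmetric tridiagonal with positive off-diagonal entries. -/
def IsJacobi {N : ℕ} (A : Matrix (Fin N) (Fin N) ℝ) : Prop :=
  (∀ i j, A i j = A j i) ∧
  (∀ i j : Fin N, (i : ℕ) + 1 < (j : ℕ) → A i j = 0) ∧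
  (∀ i j : Fin N, (i : ℕ) + 1 = (j : ℕ) → 0 < A i j)

/-!
The functions `S · λ` are eigenfunctions of `d² / dt²` for the eigenvalues `-λ`, so repeatedly
differentiating a local linear relation between them gives a Vandermonde system, which together
with `S'² + λ S² = 1` forces the relation to be trivial. If `f` lies in the span of continuous
functions that are linearly independent on `[a, b]` and all its moments against them vanish, then
`∫ f² = 0`, so `f = 0`; hence the moment map is an injective linear map between spaces of the same
dimension. The control operator is this moment map followed by the expansion along the eigenvectors
with the nonzero weights `1 / ρ k`.
-/

section SineCosine

/-- The derivative of `S` in the time variable, that is, the solution of `C'' = -λ C`, `C 0 = 1`,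
`C' 0 = 0`. Iterated derivatives of `S` alternate between multiples of `S` and of `C`. -/
noncomputable def C (t lam : ℝ) : ℝ :=
  if 0 < lam then Real.cos (√lam * t)
  else if lam < 0 then Real.cosh (√(-lam) * t)
  else 1

theorem hasDerivAt_S (lam t : ℝ) : HasDerivAt (S · lam) (C t lam) t := by
  unfold S C
  split_ifs with hpos hneg
  · have hsqrt : √lam ≠ 0 := (Real.sqrt_pos.2 hpos).ne'
    refine (((hasDerivAt_id t).const_mul √lam).sin.div_const √lam).congr_deriv ?_
    simp only [id_eq]
    field_simp
  · have hsqrt : √(-lam) ≠ 0 := (Real.sqrt_pos.2 (neg_pos.2 hneg)).ne'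
    refine (((hasDerivAt_id t).const_mul √(-lam)).sinh.div_const √(-lam)).congr_deriv ?_
    simp only [id_eq]
    field_simp
  · exact hasDerivAt_id t

theorem hasDerivAt_C (lam t : ℝ) : HasDerivAt (C · lam) (-lam * S t lam) t := by
  unfold S C
  split_ifs with hpos hneg
  · have hsqrt : √lam ≠ 0 := (Real.sqrt_pos.2 hpos).ne'
    have hsq : √lam ^ 2 = lam := Real.sq_sqrt hpos.le
    refine ((hasDerivAt_id t).const_mul √lam).cos.congr_deriv ?_
    simp only [id_eq]
    field_simp
    rw [hsq, mul_comm]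
  · have hsqrt : √(-lam) ≠ 0 := (Real.sqrt_pos.2 (neg_pos.2 hneg)).ne'
    have hsq : √(-lam) ^ 2 = -lam := Real.sq_sqrt (neg_pos.2 hneg).le
    refine ((hasDerivAt_id t).const_mul √(-lam)).cosh.congr_deriv ?_
    simp only [id_eq]
    field_simp
    rw [hsq, neg_mul]
  · have hzero : lam = 0 := le_antisymm (not_lt.1 hpos) (not_lt.1 hneg)
    simpa only [hzero, neg_zero, zero_mul] using hasDerivAt_const t (1 : ℝ)

theorem C_sq_add_mul_S_sq (t lam : ℝ) : C t lam ^ 2 + lam * S t lam ^ 2 = 1 := by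
  unfold S C
  split_ifs with hpos hneg
  · rw [div_pow, Real.sq_sqrt hpos.le, mul_div_cancel₀ _ hpos.ne', Real.cos_sq_add_sin_sq]
  · rw [div_pow, Real.sq_sqrt (neg_pos.2 hneg).le, div_neg, mul_neg, mul_div_cancel₀ _ hneg.ne,
      ← sub_eq_add_neg, Real.cosh_sq_sub_sinh_sq]
  · rw [le_antisymm (not_lt.1 hpos) (not_lt.1 hneg), one_pow, zero_mul, add_zero]

theorem continuous_S (lam : ℝ) : Continuous (S · lam) :=
  continuous_iff_continuousAt.2 fun t => (hasDerivAt_S lam t).continuousAt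

end SineCosine

section LinearIndependence

open Filter Topology

theorem eq_zero_of_forall_sum_mul_pow_eq_zero {R ι : Type*} [CommRing R] [IsDomain R] [Fintype ι]
    {x v : ι → R} (hx : Function.Injective x) (h : ∀ j : ℕ, ∑ k, v k * x k ^ j = 0) : v = 0 := by
  let e := Fintype.equivFin ι
  have hzero : v ∘ e.symm = 0 :=
    Matrix.eq_zero_of_forall_pow_sum_mul_pow_eq_zero (hx.comp e.symm.injective) fun j =>
      (e.symm.sum_comp fun k => v k * x k ^ (j : ℕ)).trans (h j)
  exact e.symm.surjective.injective_comp_right hzero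

theorem eventually_eq_zero_of_hasDerivAt {𝕜 F : Type*} [NontriviallyNormedField 𝕜]
    [NormedAddCommGroup F] [NormedSpace 𝕜 F] {f f' : 𝕜 → F} {x : 𝕜}
    (hf : ∀ t, HasDerivAt f (f' t) t) (h : ∀ᶠ t in 𝓝 x, f t = 0) : ∀ᶠ t in 𝓝 x, f' t = 0 := by
  filter_upwards [h.eventually_nhds] with t ht
  exact (hf t).unique ((hasDerivAt_const t 0).congr_of_eventuallyEq ht)

variable {ι : Type*}

section Germs

variable [Fintype ι] {lam c : ι → ℝ} {x : ℝ}

theorem eventually_sum_mul_C_eq_zero (h : ∀ᶠ t in 𝓝 x, ∑ k, c k * S t (lam k) = 0) :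
    ∀ᶠ t in 𝓝 x, ∑ k, c k * C t (lam k) = 0 :=
  eventually_eq_zero_of_hasDerivAt
    (fun t => HasDerivAt.fun_sum fun k _ => (hasDerivAt_S (lam k) t).const_mul (c k)) h

theorem eventually_sum_mul_pow_mul_S_eq_zero (h : ∀ᶠ t in 𝓝 x, ∑ k, c k * S t (lam k) = 0)
    (j : ℕ) : ∀ᶠ t in 𝓝 x, ∑ k, c k * (-lam k) ^ j * S t (lam k) = 0 := by
  induction j with
  | zero => simpa only [pow_zero, mul_one] using h
  | succ j ih =>
    have hderiv := eventually_eq_zero_of_hasDerivAt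
      (fun t => HasDerivAt.fun_sum fun k _ =>
        (hasDerivAt_C (lam k) t).const_mul (c k * (-lam k) ^ j))
      (eventually_sum_mul_C_eq_zero ih)
    simpa only [pow_succ, mul_assoc] using hderiv

theorem eq_zero_of_eventually_sum_mul_S_eq_zero (hlam : Function.Injective lam)
    (h : ∀ᶠ t in 𝓝 x, ∑ k, c k * S t (lam k) = 0) : c = 0 := by
  have hneg : Function.Injective fun k => -lam k := neg_injective.comp hlam
  have hS : (fun k => c k * S x (lam k)) = 0 :=
    eq_zero_of_forall_sum_mul_pow_eq_zero hneg fun j => by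
      simpa only [mul_right_comm] using (eventually_sum_mul_pow_mul_S_eq_zero h j).self_of_nhds
  have hC : (fun k => c k * C x (lam k)) = 0 :=
    eq_zero_of_forall_sum_mul_pow_eq_zero hneg fun j => by
      simpa only [mul_right_comm] using
        (eventually_sum_mul_C_eq_zero (eventually_sum_mul_pow_mul_S_eq_zero h j)).self_of_nhds
  funext k
  have hSk : c k * S x (lam k) = 0 := congrFun hS k
  have hCk : c k * C x (lam k) = 0 := congrFun hC k
  calc c k = c k * (C x (lam k) ^ 2 + lam k * S x (lam k) ^ 2) := by
        rw [C_sq_add_mul_S_sq, mul_one]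
    _ = c k * C x (lam k) * C x (lam k) + c k * S x (lam k) * (lam k * S x (lam k)) := by ring
    _ = 0 := by rw [hSk, hCk, zero_mul, zero_mul, add_zero]

end Germs

/-- The functions `t ↦ S (T - t) (λ k)`, against which a control on `(0, T)` is integrated to give
the coefficients of the state at time `T`. -/
noncomputable def controlKernel (lam : ι → ℝ) (T : ℝ) (k : ι) (t : ℝ) : ℝ :=
  S (T - t) (lam k)

theorem continuous_controlKernel (lam : ι → ℝ) (T : ℝ) (k : ι) :
    Continuous (controlKernel lam T k) :=
  (continuous_S (lam k)).comp (continuous_sub_left T)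

theorem linearIndependent_domRestrict_controlKernel [Finite ι] {lam : ι → ℝ}
    (hlam : Function.Injective lam) (T : ℝ) {s : Set ℝ} (hs : (interior s).Nonempty) :
    LinearIndependent ℝ fun k => s.domRestrict (controlKernel lam T k) := by
  obtain ⟨x, hx⟩ := hs
  have := Fintype.ofFinite ι
  refine Fintype.linearIndependent_iff.2 fun c hc => ?_
  have hon : ∀ t ∈ s, ∑ k, c k * S (T - t) (lam k) = 0 := fun t ht => by
    simpa only [Finset.sum_apply, Pi.smul_apply, smul_eq_mul, controlKernel, Set.domRestrict_apply,
      Pi.zero_apply] using congrFun hc ⟨t, ht⟩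
  have hreflect : Tendsto (T - ·) (𝓝 (T - x)) (𝓝 x) :=
    (continuous_sub_left T).tendsto' _ _ (sub_sub_cancel T x)
  have hevent : ∀ᶠ t in 𝓝 (T - x), ∑ k, c k * S t (lam k) = 0 := by
    filter_upwards [hreflect (mem_interior_iff_mem_nhds.1 hx)] with t ht
    simpa only [sub_sub_cancel] using hon (T - t) ht
  exact congrFun (eq_zero_of_eventually_sum_mul_S_eq_zero hlam hevent)

end LinearIndependence

section MomentMap

open Set Submodule

/-- The moments `∫ₐᵇ f vₖ` of `f` against a family `v`. On arbitrary functions this is not linear,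
as integrals of nonintegrable products are `0`; see `momentLinearMap`. -/
noncomputable def momentMap {ι : Type*} (v : ι → ℝ → ℝ) (a b : ℝ) (f : ℝ → ℝ) (k : ι) : ℝ :=
  ∫ t in a..b, f t * v k t

theorem eqOn_zero_of_integral_mul_self_eq_zero {f : ℝ → ℝ} {a b : ℝ} (hab : a < b)
    (hf : ContinuousOn f (Icc a b)) (h : ∫ t in a..b, f t * f t = 0) : EqOn f 0 (Icc a b) := by
  intro t ht
  by_contra hne
  exact h.not_gt <| intervalIntegral.integral_pos hab (hf.mul hf) (fun _ _ => mul_self_nonneg _)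
    ⟨t, ht, mul_self_pos.2 hne⟩

variable {ι : Type*} {v : ι → ℝ → ℝ} {a b : ℝ}

theorem continuousOn_of_mem_span_range {s : Set ℝ} (hv : ∀ k, ContinuousOn (v k) s) {f : ℝ → ℝ}
    (hf : f ∈ span ℝ (range v)) : ContinuousOn f s := by
  induction hf using span_induction with
  | mem _ h => obtain ⟨k, rfl⟩ := h; exact hv k
  | zero => exact continuousOn_const
  | add _ _ _ _ hf hg => exact hf.add hg
  | smul r _ _ hf => exact hf.const_smul r

theorem integral_mul_eq_zero_of_momentMap_eq_zero (hab : a ≤ b)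
    (hv : ∀ k, ContinuousOn (v k) (Icc a b)) {f g : ℝ → ℝ} (hf : ContinuousOn f (Icc a b))
    (hzero : momentMap v a b f = 0) (hg : g ∈ span ℝ (range v)) :
    ∫ t in a..b, f t * g t = 0 := by
  have hint {g : ℝ → ℝ} (hg : g ∈ span ℝ (range v)) :
      IntervalIntegrable (fun t => f t * g t) volume a b :=
    (hf.mul (continuousOn_of_mem_span_range hv hg)).intervalIntegrable_of_Icc hab
  induction hg using span_induction with
  | mem _ h => obtain ⟨k, rfl⟩ := h; exact congrFun hzero k
  | zero => simp only [Pi.zero_apply, mul_zero, intervalIntegral.integral_zero]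
  | add g₁ g₂ h₁ h₂ ih₁ ih₂ =>
    simp only [Pi.add_apply, mul_add]
    rw [intervalIntegral.integral_add (hint h₁) (hint h₂), ih₁, ih₂, add_zero]
  | smul r g _ ih =>
    simp only [Pi.smul_apply, smul_eq_mul, mul_left_comm _ r]
    rw [intervalIntegral.integral_const_mul, ih, mul_zero]

theorem eq_zero_of_momentMap_eq_zero (hab : a < b) (hv : ∀ k, ContinuousOn (v k) (Icc a b))
    (hli : LinearIndependent ℝ fun k => (Icc a b).domRestrict (v k)) {f : ℝ → ℝ}
    (hf : f ∈ span ℝ (range v)) (hzero : momentMap v a b f = 0) : f = 0 := by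
  have hcont : ContinuousOn f (Icc a b) := continuousOn_of_mem_span_range hv hf
  have hon : EqOn f 0 (Icc a b) := eqOn_zero_of_integral_mul_self_eq_zero hab hcont
    (integral_mul_eq_zero_of_momentMap_eq_zero hab.le hv hcont hzero hf)
  let restriction : (ℝ → ℝ) →ₗ[ℝ] (Icc a b → ℝ) := LinearMap.funLeft ℝ ℝ Subtype.val
  have hdisj : Disjoint (span ℝ (range v)) restriction.ker :=
    Submodule.range_ker_disjoint (f := restriction) hli
  exact (Submodule.disjoint_def.1 hdisj) f hf (domRestrict_eq_domRestrict_iff.2 hon)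

/-- `momentMap` on the span of a family of continuous functions, where it is linear. -/
noncomputable def momentLinearMap (hab : a ≤ b) (hv : ∀ k, ContinuousOn (v k) (Icc a b)) :
    span ℝ (range v) →ₗ[ℝ] ι → ℝ where
  toFun f := momentMap v a b f
  map_add' f g := by
    have hint (f : span ℝ (range v)) (k : ι) :
        IntervalIntegrable (fun t => (f : ℝ → ℝ) t * v k t) volume a b :=
      ((continuousOn_of_mem_span_range hv f.2).mul (hv k)).intervalIntegrable_of_Icc hab
    funext k
    simp only [momentMap, coe_add, Pi.add_apply, add_mul]
    exact intervalIntegral.integral_add (hint f k) (hint g k)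
  map_smul' r f := by
    funext k
    simp only [momentMap, coe_smul, Pi.smul_apply, smul_eq_mul, mul_assoc, RingHom.id_apply]
    exact intervalIntegral.integral_const_mul r _

theorem bijective_momentLinearMap [Finite ι] (hab : a < b)
    (hv : ∀ k, ContinuousOn (v k) (Icc a b))
    (hli : LinearIndependent ℝ fun k => (Icc a b).domRestrict (v k)) :
    Function.Bijective (momentLinearMap hab.le hv) := by
  have := Fintype.ofFinite ι
  have hinj : Function.Injective (momentLinearMap hab.le hv) :=
    (injective_iff_map_eq_zero _).2 fun f hf =>
      Subtype.ext (eq_zero_of_momentMap_eq_zero hab hv hli f.2 hf)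
  have hfinrank : Module.finrank ℝ (span ℝ (range v)) = Module.finrank ℝ (ι → ℝ) := by
    rw [finrank_span_eq_card (hli.of_comp (LinearMap.funLeft ℝ ℝ Subtype.val)),
      Module.finrank_fintype_fun_eq_card]
  have : FiniteDimensional ℝ (span ℝ (range v)) := .span_of_finite ℝ (finite_range v)
  exact ⟨hinj, (LinearMap.injective_iff_surjective_of_finrank_eq_finrank hfinrank).1 hinj⟩

theorem bijOn_momentMap [Finite ι] (hab : a < b) (hv : ∀ k, ContinuousOn (v k) (Icc a b))
    (hli : LinearIndependent ℝ fun k => (Icc a b).domRestrict (v k)) :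
    BijOn (momentMap v a b) (span ℝ (range v)) univ :=
  have hbij := bijective_momentLinearMap hab hv hli
  ⟨mapsTo_univ _ _, injOn_iff_injective.2 hbij.injective, surjOn_iff_surjective.2 hbij.surjective⟩

end MomentMap

section ControlOperator

open Set

theorem bijective_sum_mul_smul {K V ι : Type*} [Field K] [AddCommGroup V] [Module K V]
    [FiniteDimensional K V] [Fintype ι] {φ : ι → V} (hφ : LinearIndependent K φ)
    (hcard : Fintype.card ι = Module.finrank K V) {w : ι → K} (hw : ∀ k, w k ≠ 0) :
    Function.Bijective fun x : ι → K => ∑ k, (w k * x k) • φ k := by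
  have hli : LinearIndependent K fun k => w k • φ k :=
    hφ.units_smul fun k => Units.mk0 (w k) (hw k)
  have hinj : Function.Injective (Fintype.linearCombination K fun k => w k • φ k) :=
    hli.fintypeLinearCombination_injective
  have hfinrank : Module.finrank K (ι → K) = Module.finrank K V := by
    rw [Module.finrank_fintype_fun_eq_card, hcard]
  have hcoe : ⇑(Fintype.linearCombination K fun k => w k • φ k) =
      fun x => ∑ k, (w k * x k) • φ k := by
    funext x
    simp only [Fintype.linearCombination_apply, smul_smul, mul_comm]
  exact hcoe ▸ ⟨hinj, (LinearMap.injective_iff_surjective_of_finrank_eq_finrank hfinrank).1 hinj⟩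

variable {ι : Type*}

theorem linearIndependent_of_mulVec_eq_smul [Fintype ι] {K : Type*} [Field K] {A : Matrix ι ι K}
    {lam : ι → K} (hlam : Function.Injective lam) {φ : ι → ι → K} (hφ : ∀ k, φ k ≠ 0)
    (heig : ∀ k, A *ᵥ φ k = lam k • φ k) : LinearIndependent K φ :=
  Module.End.eigenvectors_linearIndependent' A.mulVecLin lam hlam φ fun k =>
    ⟨Module.End.mem_eigenspace_iff.2 (heig k), hφ k⟩

/-- The span `F₁ᵀ` of the kernels `t ↦ S (T - t) (λ k)`. -/
noncomputable def controlSpace (lam : ι → ℝ) (T : ℝ) : Submodule ℝ (ℝ → ℝ) :=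
  Submodule.span ℝ (range (controlKernel lam T))

/-- The control operator `Wᵀ`, sending a control `f` to the state `u^f(T)` reached from rest by
`u'' = -A u + f e₁`, where `A` is a Jacobi matrix with eigenvalues `λ k`, eigenvectors `φ k` of
first component `1` and `ρ k = ⟨φ k, φ k⟩`. It is encoded by the spectral expansion of `u^f(T)`,
which makes sense for arbitrary `λ`, `φ` and `ρ`. -/
noncomputable def controlOperator [Fintype ι] (lam : ι → ℝ) (φ : ι → ι → ℝ) (ρ : ι → ℝ) (T : ℝ)
    (f : ℝ → ℝ) : ι → ℝ :=
  ∑ k, (1 / ρ k * momentMap (controlKernel lam T) 0 T f k) • φ k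

variable {lam : ι → ℝ} {T : ℝ}

theorem finrank_controlSpace [Fintype ι] (hlam : Function.Injective lam) (T : ℝ) :
    Module.finrank ℝ (controlSpace lam T) = Fintype.card ι := by
  have hli : LinearIndependent ℝ fun k => univ.domRestrict (controlKernel lam T k) :=
    linearIndependent_domRestrict_controlKernel hlam T (by simp)
  exact finrank_span_eq_card (hli.of_comp (LinearMap.funLeft ℝ ℝ Subtype.val))

theorem bijOn_momentMap_controlSpace [Finite ι] (hlam : Function.Injective lam) (hT : 0 < T) :
    BijOn (momentMap (controlKernel lam T) 0 T) (controlSpace lam T) univ := by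
  have hinterior : (interior (Icc 0 T)).Nonempty := by
    rwa [interior_Icc, nonempty_Ioo]
  exact bijOn_momentMap hT (fun k => (continuous_controlKernel lam T k).continuousOn)
    (linearIndependent_domRestrict_controlKernel hlam T hinterior)

theorem bijOn_controlOperator [Fintype ι] (hlam : Function.Injective lam) (hT : 0 < T)
    {φ : ι → ι → ℝ} (hφ : LinearIndependent ℝ φ) {ρ : ι → ℝ} (hρ : ∀ k, ρ k ≠ 0) :
    BijOn (controlOperator lam φ ρ T) (controlSpace lam T) univ := by
  have hexpand : Function.Bijective fun x : ι → ℝ => ∑ k, (1 / ρ k * x k) • φ k :=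
    bijective_sum_mul_smul hφ (Module.finrank_fintype_fun_eq_card ℝ).symm
      fun k => one_div_ne_zero (hρ k)
  exact hexpand.bijOn_univ.comp (bijOn_momentMap_controlSpace hlam hT)

end ControlOperator

theorem stmt2_general {ι : Type*} [Fintype ι] {lam : ι → ℝ} (hlam : Function.Injective lam)
    {T : ℝ} (hT : 0 < T) {A : Matrix ι ι ℝ} {φ : ι → ι → ℝ} (hφ : ∀ k, φ k ≠ 0)
    (heig : ∀ k, A *ᵥ φ k = lam k • φ k) {ρ : ι → ℝ} (hρ : ∀ k, ρ k = φ k ⬝ᵥ φ k) :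
    Module.finrank ℝ (controlSpace lam T) = Fintype.card ι ∧
    Set.BijOn (momentMap (controlKernel lam T) 0 T) (controlSpace lam T) Set.univ ∧
    ∀ a : ι → ℝ, ∃! f : ℝ → ℝ, f ∈ controlSpace lam T ∧ controlOperator lam φ ρ T f = a := by
  have hρ_ne (k : ι) : ρ k ≠ 0 := by
    rw [hρ]
    exact dotProduct_self_eq_zero.not.2 (hφ k)
  have hcontrol : Set.BijOn (controlOperator lam φ ρ T) (controlSpace lam T) Set.univ :=
    bijOn_controlOperator hlam hT (linearIndependent_of_mulVec_eq_smul hlam hφ heig) hρ_ne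
  refine ⟨finrank_controlSpace hlam T, bijOn_momentMap_controlSpace hlam hT, fun a => ?_⟩
  obtain ⟨f, hf, hfa⟩ := hcontrol.surjOn (Set.mem_univ a)
  exact ⟨f, ⟨hf, hfa⟩, fun g ⟨hg, hga⟩ => hcontrol.injOn hg hf (hga.trans hfa.symm)⟩

/-- the span `F₁ᵀ` of `t ↦ S(T-t, λ_k)` has dimension `N`, the moment
map `Φ` is a bijection from `F₁ᵀ` onto `ℝᴺ`, and consequently the control operator
`Wᵀ` maps `F₁ᵀ` onto `ℝᴺ` isomorphically: every state `a` is reached by a unique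
control in `F₁ᵀ`. -/
theorem stmt2 {N : ℕ} (hN : 0 < N) (lam : Fin N → ℝ) (hlam : Function.Injective lam)
    (T : ℝ) (hT : 0 < T)
    (F1 : Submodule ℝ (ℝ → ℝ))
    (hF1 : F1 = Submodule.span ℝ (Set.range fun k : Fin N => fun t : ℝ => S (T - t) (lam k)))
    (Φ : (ℝ → ℝ) → (Fin N → ℝ))
    (hΦ : Φ = fun f => fun k => ∫ τ in (0:ℝ)..T, f τ * S (T - τ) (lam k))
    (A : Matrix (Fin N) (Fin N) ℝ) (hA : IsJacobi A)
    (φ : Fin N → Fin N → ℝ) (ρ : Fin N → ℝ)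
    (hmono : StrictMono lam)
    (heig : ∀ k, A.mulVec (φ k) = lam k • φ k)
    (hφ1 : ∀ k, φ k ⟨0, hN⟩ = 1)
    (hρ : ∀ k, ρ k = ∑ i, φ k i * φ k i) :
    Module.finrank ℝ F1 = N ∧
    Set.BijOn Φ (F1 : Set (ℝ → ℝ)) Set.univ ∧
    ∀ a : Fin N → ℝ, ∃! g : ℝ → ℝ, g ∈ F1 ∧
      (∑ k, ((1 / ρ k) * ∫ τ in (0:ℝ)..T, g τ * S (T - τ) (lam k)) • φ k) = a := by
  subst hF1 hΦ
  simpa only [Fintype.card_fin] using!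
    stmt2_general hlam hT (fun k hzero => by simpa [hzero] using hφ1 k) heig hρ
end

section
/- Given distinct real numbers λ_1 < … < λ_N and positive numbers ρ_1, …, ρ_N with Σ_{k=1}^N 1/ρ_k = 1, there exists a unique N×N Jacobi matrix A (real symmetric tridiagonal with positive off-diagonal entries) whose eigenvalues are exactly λ_1, …, λ_N and whose eigenvectors φ_k, normalized so that (φ_k)_1 = 1, satisfy ⟨φ_k, φ_k⟩ = ρ_k for each k. Consequently, a function r is the response function of the dynamical system associated with some N×N Jacobi matrix if and only if r(t) = Σ_{k=1}^N (1/ρ_k) S(t, λ_k) for such data (λ_k, ρ_k). -/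
open MeasureTheory Real Matrix

/-! Let `Λ = diag(λ_k)`, `v_k = 1 / √ρ_k`, and let `K` be the matrix with columns `Λ ^ j v`, which
depends on the spectral data only. If the rows of the orthogonal matrix `P` are the normalized
eigenvectors of the symmetric matrix `A`, then `P A = Λ P` and `P e₀ = v`, so `K = P R`, where `R`
has columns `A ^ j e₀`. Now `A` is Jacobi exactly when `R` is upper triangular with positive
diagonal, that is, when `K = P R` is the QR factorization of `K`. Existence and uniqueness of `A`
are therefore existence and uniqueness of this factorization. -/

section GramSchmidt

open InnerProductSpace

variable {𝕜 E ι : Type*} [RCLike 𝕜] [NormedAddCommGroup E] [InnerProductSpace 𝕜 E]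
  [LinearOrder ι] [LocallyFiniteOrderBot ι] [WellFoundedLT ι]

theorem inner_gramSchmidt_self (f : ι → E) (i : ι) :
    inner 𝕜 (gramSchmidt 𝕜 f i) (f i) = (‖gramSchmidt 𝕜 f i‖ : 𝕜) ^ 2 := by
  have horth : ∀ j ∈ Finset.Iio i, inner 𝕜 (gramSchmidt 𝕜 f i)
      ((inner 𝕜 (gramSchmidt 𝕜 f j) (f i) / (‖gramSchmidt 𝕜 f j‖ : 𝕜) ^ 2) •
        gramSchmidt 𝕜 f j) = 0 := fun j hj => by
    rw [inner_smul_right, gramSchmidt_orthogonal 𝕜 f (Finset.mem_Iio.1 hj).ne', mul_zero]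
  conv_lhs => rw [gramSchmidt_def'' 𝕜 f i, inner_add_right, inner_sum]
  rw [Finset.sum_eq_zero horth, add_zero, inner_self_eq_norm_sq_to_K]

theorem inner_gramSchmidtNormed_self (f : ι → E) (i : ι) :
    inner 𝕜 (gramSchmidtNormed 𝕜 f i) (f i) = (‖gramSchmidt 𝕜 f i‖ : 𝕜) := by
  rw [gramSchmidtNormed, inner_smul_left, inner_gramSchmidt_self, map_inv₀, RCLike.conj_ofReal]
  obtain h | h := eq_or_ne (‖gramSchmidt 𝕜 f i‖ : 𝕜) 0
  · simp [h]
  · field_simp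

end GramSchmidt

section UpperTriangular

variable {n R : Type*} [LinearOrder n]

/-- Upper triangular matrices with positive diagonal: the normalization of the triangular factor
that makes QR factorizations unique. -/
structure IsPosUpperTriangular [Zero R] [LT R] (M : Matrix n n R) : Prop where
  isUpperTriangular : M.IsUpperTriangular
  diag_pos : ∀ i, 0 < M i i

variable [Fintype n]

theorem mul_apply_self_of_isUpperTriangular [NonUnitalNonAssocSemiring R] {M T : Matrix n n R}
    (hM : M.IsUpperTriangular) (hT : T.IsUpperTriangular) (i : n) :
    (M * T) i i = M i i * T i i := by
  rw [mul_apply, Finset.sum_eq_single i _ (by simp)]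
  intro j _ hji
  obtain hji | hij := hji.lt_or_gt
  · rw [hM hji, zero_mul]
  · rw [hT hij, mul_zero]

theorem eq_one_of_mem_orthogonalGroup_of_isPosUpperTriangular [CommRing R] [LinearOrder R]
    [IsStrictOrderedRing R] {U : Matrix n n R} (hU : U ∈ orthogonalGroup n R)
    (hpos : IsPosUpperTriangular U) : U = 1 := by
  have hUU : Uᵀ * U = 1 := (mem_orthogonalGroup_iff' n R).1 hU
  have hupper : U.IsUpperTriangular := hpos.isUpperTriangular
  have hlower : Uᵀ.IsUpperTriangular := by
    have := invertibleOfLeftInverse U Uᵀ hUU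
    exact inv_eq_left_inv hUU ▸ blockTriangular_inv_of_blockTriangular hupper
  have hdiag : ∀ i, U i i = 1 := fun i => by
    have hsq : U i i * U i i = 1 := by
      rw [← one_apply_eq (α := R) i, ← hUU, mul_apply_self_of_isUpperTriangular hlower hupper,
        transpose_apply]
    exact (mul_self_eq_one_iff.1 hsq).resolve_right fun h => by linarith [hpos.diag_pos i]
  ext i j
  obtain hij | rfl | hij := lt_trichotomy i j
  · exact (hlower hij).trans (one_apply_ne hij.ne).symm
  · rw [hdiag, one_apply_eq]
  · exact (hupper hij).trans (one_apply_ne hij.ne').symm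

theorem col_eq_of_mul_isPosUpperTriangular [CommRing R] [LinearOrder R] [IsStrictOrderedRing R]
    {P T : Matrix n n R} (hP : P ∈ orthogonalGroup n R) (hT : IsPosUpperTriangular T) {i : n}
    (hi : IsMin i) (hnorm : (P * T).col i ⬝ᵥ (P * T).col i = 1) : P.col i = (P * T).col i := by
  have hcol : (P * T).col i = T i i • P.col i := by
    ext k
    rw [col_apply, mul_apply, Finset.sum_eq_single i _ (by simp)]
    · exact mul_comm _ _
    · intro j _ hji
      have hij : i < j := hji.lt_or_gt.resolve_left hi.not_lt
      rw [hT.isUpperTriangular hij, mul_zero]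
  have hPcol : P.col i ⬝ᵥ P.col i = 1 := by
    have h := congrFun₂ ((mem_orthogonalGroup_iff' n R).1 hP) i i
    rwa [one_apply_eq] at h
  have hsq : T i i * T i i = 1 := by
    rwa [hcol, smul_dotProduct, dotProduct_smul, hPcol, smul_eq_mul, smul_eq_mul, mul_one] at hnorm
  have hTi : T i i = 1 :=
    (mul_self_eq_one_iff.1 hsq).resolve_right fun h => by linarith [hT.diag_pos i]
  rw [hcol, hTi, one_smul]

section OrderedField

variable [Field R] [LinearOrder R] [IsStrictOrderedRing R]

theorem IsPosUpperTriangular.isUnit_det {M : Matrix n n R} (hM : IsPosUpperTriangular M) :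
    IsUnit M.det := by
  rw [det_of_isUpperTriangular hM.isUpperTriangular, isUnit_iff_ne_zero]
  exact Finset.prod_ne_zero_iff.2 fun i _ => (hM.diag_pos i).ne'

theorem IsPosUpperTriangular.of_mul_eq {M T V : Matrix n n R} (hT : IsPosUpperTriangular T)
    (hV : IsPosUpperTriangular V) (h : M * T = V) : IsPosUpperTriangular M := by
  have hM : M.IsUpperTriangular := by
    have := invertibleOfIsUnitDet T hT.isUnit_det
    rw [← mul_nonsing_inv_cancel_right T M hT.isUnit_det, h]
    exact hV.isUpperTriangular.mul (blockTriangular_inv_of_blockTriangular hT.isUpperTriangular)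
  refine ⟨hM, fun i => ?_⟩
  have hVi : 0 < M i i * T i i := by
    rw [← mul_apply_self_of_isUpperTriangular hM hT.isUpperTriangular, h]
    exact hV.diag_pos i
  exact pos_of_mul_pos_left hVi (hT.diag_pos i).le

theorem eq_of_mul_isPosUpperTriangular_eq {P Q T V : Matrix n n R}
    (hP : P ∈ orthogonalGroup n R) (hQ : Q ∈ orthogonalGroup n R)
    (hT : IsPosUpperTriangular T) (hV : IsPosUpperTriangular V) (h : P * T = Q * V) : P = Q := by
  have hQQ : Qᵀ * Q = 1 := (mem_orthogonalGroup_iff' n R).1 hQ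
  have hQQ' : Q * Qᵀ = 1 := (mem_orthogonalGroup_iff n R).1 hQ
  have hQP : Qᵀ * P ∈ orthogonalGroup n R := by
    rw [mem_orthogonalGroup_iff', transpose_mul, transpose_transpose, Matrix.mul_assoc,
      ← Matrix.mul_assoc Q, hQQ', Matrix.one_mul, (mem_orthogonalGroup_iff' n R).1 hP]
  have hpos : IsPosUpperTriangular (Qᵀ * P) :=
    hT.of_mul_eq hV (by rw [Matrix.mul_assoc, h, ← Matrix.mul_assoc, hQQ, Matrix.one_mul])
  calc P = Q * (Qᵀ * P) := by rw [← Matrix.mul_assoc, hQQ', Matrix.one_mul]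
    _ = Q := by
      rw [eq_one_of_mem_orthogonalGroup_of_isPosUpperTriangular hQP hpos, Matrix.mul_one]

end OrderedField

open InnerProductSpace in
theorem exists_orthogonal_mul_isPosUpperTriangular [LocallyFiniteOrderBot n] {K : Matrix n n ℝ}
    (hK : IsUnit K) :
    ∃ Q ∈ orthogonalGroup n ℝ, ∃ T, IsPosUpperTriangular T ∧ K = Q * T := by
  let f : n → EuclideanSpace ℝ n := fun j => WithLp.toLp 2 (K.col j)
  have hf : LinearIndependent ℝ f :=
    (linearIndependent_cols_iff_isUnit.2 hK).map' (WithLp.linearEquiv 2 ℝ (n → ℝ)).symm.toLinearMap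
      (LinearEquiv.ker _)
  let b := EuclideanSpace.basisFun n ℝ
  let g := gramSchmidtOrthonormalBasis finrank_euclideanSpace f
  have hne : ∀ i, gramSchmidtNormed ℝ f i ≠ 0 := fun i =>
    norm_ne_zero_iff.1 (by rw [gramSchmidtNormed_unit_length i hf]; exact one_ne_zero)
  refine ⟨b.toBasis.toMatrix g, b.toMatrix_orthonormalBasis_mem_orthogonal g,
    g.toBasis.toMatrix f,
    ⟨gramSchmidtOrthonormalBasis_inv_isUpperTriangular _ f, fun i => ?_⟩, ?_⟩
  · rw [Module.Basis.toMatrix_apply, OrthonormalBasis.coe_toBasis_repr_apply,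
      OrthonormalBasis.repr_apply_apply, gramSchmidtOrthonormalBasis_apply _ (hne i),
      inner_gramSchmidtNormed_self]
    exact norm_pos_iff.2 (gramSchmidt_ne_zero i hf)
  · rw [← g.coe_toBasis, Module.Basis.toMatrix_mul_toMatrix]
    rfl

end UpperTriangular

section Krylov

section Semiring

variable {m R : Type*} [Fintype m] [DecidableEq m] [Semiring R]

/-- The Krylov matrix of `A` and `v`, with columns `v, A v, …, A ^ (n - 1) v`. -/
def krylov (A : Matrix m m R) (v : m → R) (n : ℕ) : Matrix m (Fin n) R :=
  of fun i j => (A ^ (j : ℕ) *ᵥ v) i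

theorem krylov_apply_zero (A : Matrix m m R) (v : m → R) (n : ℕ) [NeZero n] (i : m) :
    krylov A v n i 0 = v i := by
  simp [krylov]

theorem krylov_apply_succ (A : Matrix m m R) (v : m → R) {n : ℕ} {j k : Fin n}
    (hjk : (j : ℕ) + 1 = k) (i : m) :
    krylov A v n i k = (A * krylov A v n) i j := by
  simp only [krylov, of_apply, ← hjk, pow_succ', ← mulVec_mulVec]
  rfl

theorem mul_krylov {U A B : Matrix m m R} (h : SemiconjBy U A B) (v : m → R) (n : ℕ) :
    U * krylov A v n = krylov B (U *ᵥ v) n := by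
  ext i j
  change (U *ᵥ (A ^ (j : ℕ) *ᵥ v)) i = (B ^ (j : ℕ) *ᵥ (U *ᵥ v)) i
  rw [mulVec_mulVec, (h.pow_right j).eq, mulVec_mulVec]

end Semiring

theorem krylov_diagonal {R : Type*} [CommRing R] {n : ℕ} (d v : Fin n → R) :
    krylov (diagonal d) v n = diagonal v * vandermonde d := by
  ext i j
  simp [krylov, diagonal_pow, mulVec_diagonal, vandermonde_apply, mul_comm]

theorem isUnit_krylov_diagonal {K : Type*} [Field K] {n : ℕ} {d v : Fin n → K}
    (hd : Function.Injective d) (hv : ∀ k, v k ≠ 0) : IsUnit (krylov (diagonal d) v n) := by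
  rw [krylov_diagonal, isUnit_iff_isUnit_det, det_mul, det_diagonal, isUnit_iff_ne_zero]
  exact mul_ne_zero (Finset.prod_ne_zero_iff.2 fun k _ => hv k) (det_vandermonde_ne_zero_iff.2 hd)

end Krylov

section Hessenberg

variable {N : ℕ} {R : Type*}

/-- Upper Hessenberg matrices with positive subdiagonal: the half of `IsJacobi` that does not
involve symmetry. -/
structure IsPosHessenberg [Zero R] [LT R] (A : Matrix (Fin N) (Fin N) R) : Prop where
  apply_eq_zero : ∀ ⦃i j : Fin N⦄, (j : ℕ) + 1 < i → A i j = 0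
  subdiag_pos : ∀ ⦃i j : Fin N⦄, (j : ℕ) + 1 = i → 0 < A i j

theorem isJacobi_iff {A : Matrix (Fin N) (Fin N) ℝ} :
    IsJacobi A ↔ A.IsSymm ∧ IsPosHessenberg A := by
  constructor
  · rintro ⟨hsymm, hzero, hpos⟩
    exact ⟨IsSymm.ext fun i j => hsymm j i, fun i j h => hsymm j i ▸ hzero j i h,
      fun i j h => hsymm j i ▸ hpos j i h⟩
  · rintro ⟨hsymm, hA⟩
    exact ⟨fun i j => hsymm.apply j i, fun i j h => hsymm.apply i j ▸ hA.apply_eq_zero h,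
      fun i j h => hsymm.apply i j ▸ hA.subdiag_pos h⟩

theorem krylov_apply_succ_eq_mul [Semiring R] {A : Matrix (Fin N) (Fin N) R} {v : Fin N → R}
    {i j k : Fin N} (hjk : (j : ℕ) + 1 = k) (hA : ∀ l < j, A i l = 0)
    (hK : ∀ l, j < l → krylov A v N l j = 0) :
    krylov A v N i k = A i j * krylov A v N j j := by
  rw [krylov_apply_succ A v hjk, mul_apply, Finset.sum_eq_single j _ (by simp)]
  intro l _ hlj
  obtain hlj | hjl := hlj.lt_or_gt
  · rw [hA l hlj, zero_mul]
  · rw [hK l hjl, mul_zero]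

variable [NeZero N] [Ring R] [LinearOrder R] [IsStrictOrderedRing R]
  {A : Matrix (Fin N) (Fin N) R}

theorem IsPosHessenberg.isPosUpperTriangular_krylov (hA : IsPosHessenberg A) :
    IsPosUpperTriangular (krylov A (Pi.single 0 1) N) := by
  set K := krylov A (Pi.single 0 1) N with hK
  suffices h : ∀ (n : ℕ) (hn : n < N), (∀ i, ⟨n, hn⟩ < i → K i ⟨n, hn⟩ = 0) ∧
      0 < K ⟨n, hn⟩ ⟨n, hn⟩ from
    ⟨fun i j hji => (h j j.2).1 i hji, fun i => (h i i.2).2⟩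
  intro n
  induction n with
  | zero =>
    intro hn
    change (∀ i, 0 < i → K i 0 = 0) ∧ 0 < K 0 0
    simp +contextual [hK, krylov_apply_zero, ne_of_gt]
  | succ n ih =>
    intro hn
    obtain ⟨hzero, hpos⟩ := ih (by omega)
    let j : Fin N := ⟨n, by omega⟩
    let k : Fin N := ⟨n + 1, hn⟩
    have hcol : ∀ i, j < i → K i k = A i j * K j j := fun i hi =>
      krylov_apply_succ_eq_mul rfl (fun l hl => hA.apply_eq_zero (by omega)) hzero
    have hjk : j < k := Nat.lt_succ_self n
    refine ⟨fun i hi => ?_, ?_⟩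
    · rw [hcol i (hjk.trans hi), hA.apply_eq_zero hi, zero_mul]
    · rw [hcol k hjk]
      exact mul_pos (hA.subdiag_pos rfl) hpos

theorem IsPosHessenberg.of_isPosUpperTriangular_krylov
    (hK : IsPosUpperTriangular (krylov A (Pi.single 0 1) N)) : IsPosHessenberg A := by
  set K := krylov A (Pi.single 0 1) N
  have hcol : ∀ {i j k : Fin N}, (j : ℕ) + 1 = k → (∀ l < j, A i l = 0) →
      K i k = A i j * K j j := fun hjk hA =>
    krylov_apply_succ_eq_mul hjk hA fun l hl => hK.isUpperTriangular hl
  have hzero : ∀ j i : Fin N, (j : ℕ) + 1 < i → A i j = 0 := by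
    intro j
    induction j using WellFoundedLT.induction with
    | ind j ih =>
      intro i hij
      let k : Fin N := ⟨j + 1, by omega⟩
      have hprod : A i j * K j j = 0 := by
        rw [← hcol (k := k) rfl fun l hl => ih l hl i (by omega)]
        exact hK.isUpperTriangular hij
      exact (mul_eq_zero.1 hprod).resolve_right (hK.diag_pos j).ne'
  refine ⟨fun i j => hzero j i, fun i j hji => ?_⟩
  have hprod : 0 < A i j * K j j := by
    rw [← hcol hji fun l hl => hzero l i (by omega)]
    exact hK.diag_pos i
  exact pos_of_mul_pos_left hprod (hK.diag_pos j).le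

end Hessenberg

section SpectralData

theorem dotProduct_eq_zero_of_mulVec_eq_smul {n R : Type*} [Fintype n] [CommRing R]
    [NoZeroDivisors R] {A : Matrix n n R} (hA : A.IsSymm) {x y : n → R} {a b : R}
    (hx : A *ᵥ x = a • x) (hy : A *ᵥ y = b • y) (hab : a ≠ b) : x ⬝ᵥ y = 0 := by
  have hxy : (a - b) * (x ⬝ᵥ y) = 0 := by
    have h : (A *ᵥ x) ⬝ᵥ y = x ⬝ᵥ (A *ᵥ y) := by
      rw [dotProduct_mulVec, ← mulVec_transpose, hA.eq]
    rwa [hx, hy, smul_dotProduct, dotProduct_smul, smul_eq_mul, smul_eq_mul, ← sub_eq_zero,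
      ← sub_mul] at h
  exact (mul_eq_zero.1 hxy).resolve_left (sub_ne_zero.2 hab)

variable {N : ℕ} [NeZero N] {A B : Matrix (Fin N) (Fin N) ℝ} {lam ρ : Fin N → ℝ}

/-- `(lam, ρ)` are spectral data of `A`: each `lam k` is an eigenvalue of `A` with an eigenvector
`φ k` of first coordinate `1` and squared Euclidean norm `ρ k`. -/
def HasSpectralData (A : Matrix (Fin N) (Fin N) ℝ) (lam ρ : Fin N → ℝ) : Prop :=
  ∃ φ : Fin N → Fin N → ℝ,
    (∀ k, A *ᵥ φ k = lam k • φ k) ∧ (∀ k, φ k 0 = 1) ∧ ∀ k, φ k ⬝ᵥ φ k = ρ k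

theorem HasSpectralData.pos (h : HasSpectralData A lam ρ) (k : Fin N) : 0 < ρ k := by
  obtain ⟨φ, -, hφ0, hφρ⟩ := h
  rw [← hφρ k]
  refine Finset.sum_pos' (fun i _ => mul_self_nonneg (φ k i)) ⟨0, Finset.mem_univ 0, ?_⟩
  rw [hφ0, mul_one]
  exact one_pos

theorem HasSpectralData.exists_mem_orthogonalGroup (h : HasSpectralData A lam ρ) (hA : A.IsSymm)
    (hlam : Function.Injective lam) :
    ∃ P ∈ orthogonalGroup (Fin N) ℝ, P * A = diagonal lam * P ∧ P.col 0 = fun k => (√(ρ k))⁻¹ := by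
  have hρ := h.pos
  obtain ⟨φ, hφ, hφ0, hφρ⟩ := h
  refine ⟨of fun k => (√(ρ k))⁻¹ • φ k, (mem_orthogonalGroup_iff _ _).2 ?_, ?_, ?_⟩
  · ext k l
    change ((√(ρ k))⁻¹ • φ k) ⬝ᵥ ((√(ρ l))⁻¹ • φ l) = (1 : Matrix (Fin N) (Fin N) ℝ) k l
    rw [smul_dotProduct, dotProduct_smul, smul_eq_mul, smul_eq_mul]
    obtain rfl | hkl := eq_or_ne k l
    · rw [hφρ, one_apply_eq, ← mul_assoc, ← mul_inv, Real.mul_self_sqrt (hρ k).le,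
        inv_mul_cancel₀ (hρ k).ne']
    · rw [dotProduct_eq_zero_of_mulVec_eq_smul hA (hφ k) (hφ l) (hlam.ne hkl), mul_zero, mul_zero,
        one_apply_ne hkl]
  · ext k i
    rw [diagonal_mul]
    change (((√(ρ k))⁻¹ • φ k) ᵥ* A) i = lam k * ((√(ρ k))⁻¹ * φ k i)
    rw [← mulVec_transpose, hA.eq, mulVec_smul, hφ]
    exact mul_left_comm _ _ _
  · ext k
    simp [hφ0]

theorem HasSpectralData.of_mem_orthogonalGroup {P : Matrix (Fin N) (Fin N) ℝ}
    (hP : P ∈ orthogonalGroup (Fin N) ℝ) (hA : A.IsSymm) (hPA : P * A = diagonal lam * P)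
    (hρ : ∀ k, 0 < ρ k) (hP0 : P.col 0 = fun k => (√(ρ k))⁻¹) : HasSpectralData A lam ρ := by
  refine ⟨fun k => √(ρ k) • P.row k, fun k => ?_, fun k => ?_, fun k => ?_⟩
  · have hrow : A *ᵥ P.row k = lam k • P.row k := by
      ext i
      rw [← hA.eq, mulVec_transpose]
      exact (congrFun₂ hPA k i).trans (diagonal_mul _ _ _ _)
    rw [mulVec_smul, hrow, smul_comm]
  · calc √(ρ k) * P.col 0 k = √(ρ k) * (√(ρ k))⁻¹ := by rw [hP0]
      _ = 1 := mul_inv_cancel₀ (Real.sqrt_pos.2 (hρ k)).ne'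
  · have hrow : P.row k ⬝ᵥ P.row k = 1 := by
      have h := congrFun₂ ((mem_orthogonalGroup_iff _ _).1 hP) k k
      rwa [one_apply_eq] at h
    rw [smul_dotProduct, dotProduct_smul, hrow, smul_eq_mul, smul_eq_mul, mul_one,
      Real.mul_self_sqrt (hρ k).le]

theorem inv_sqrt_dotProduct_self {n : Type*} [Fintype n] {ρ : n → ℝ} (hρ : ∀ k, 0 ≤ ρ k) :
    (fun k => (√(ρ k))⁻¹) ⬝ᵥ (fun k => (√(ρ k))⁻¹) = ∑ k, 1 / ρ k := by
  refine Finset.sum_congr rfl fun k _ => ?_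
  rw [← mul_inv, Real.mul_self_sqrt (hρ k), one_div]

theorem HasSpectralData.sum_one_div_eq_one (h : HasSpectralData A lam ρ) (hA : A.IsSymm)
    (hlam : Function.Injective lam) : ∑ k, 1 / ρ k = 1 := by
  obtain ⟨P, hP, -, hP0⟩ := h.exists_mem_orthogonalGroup hA hlam
  calc ∑ k, 1 / ρ k = P.col 0 ⬝ᵥ P.col 0 := by
        rw [hP0, inv_sqrt_dotProduct_self fun k => (h.pos k).le]
    _ = (Pᵀ * P) 0 0 := rfl
    _ = 1 := by rw [(mem_orthogonalGroup_iff' _ _).1 hP, one_apply_eq]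

theorem IsJacobi.eq_of_hasSpectralData (hA : IsJacobi A) (hB : IsJacobi B)
    (hlam : Function.Injective lam) (hAρ : HasSpectralData A lam ρ)
    (hBρ : HasSpectralData B lam ρ) : A = B := by
  obtain ⟨hAsymm, hAhess⟩ := isJacobi_iff.1 hA
  obtain ⟨hBsymm, hBhess⟩ := isJacobi_iff.1 hB
  obtain ⟨P, hP, hPA, hP0⟩ := hAρ.exists_mem_orthogonalGroup hAsymm hlam
  obtain ⟨Q, hQ, hQB, hQ0⟩ := hBρ.exists_mem_orthogonalGroup hBsymm hlam
  have hPQ : P = Q := by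
    refine eq_of_mul_isPosUpperTriangular_eq hP hQ hAhess.isPosUpperTriangular_krylov
      hBhess.isPosUpperTriangular_krylov ?_
    rw [mul_krylov hPA, mul_krylov hQB, mulVec_single_one, mulVec_single_one, hP0, hQ0]
  have hPP : Pᵀ * P = 1 := (mem_orthogonalGroup_iff' _ _).1 hP
  calc A = Pᵀ * (P * A) := by rw [← Matrix.mul_assoc, hPP, Matrix.one_mul]
    _ = Pᵀ * (P * B) := by rw [hPA, hPQ, hQB]
    _ = B := by rw [← Matrix.mul_assoc, hPP, Matrix.one_mul]

theorem exists_orthogonal_isPosHessenberg {d v : Fin N → ℝ} (hd : Function.Injective d)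
    (hv : ∀ k, v k ≠ 0) (hvv : v ⬝ᵥ v = 1) :
    ∃ P ∈ orthogonalGroup (Fin N) ℝ, P.col 0 = v ∧ IsPosHessenberg (Pᵀ * diagonal d * P) := by
  obtain ⟨P, hP, T, hT, hPT⟩ :=
    exists_orthogonal_mul_isPosUpperTriangular (isUnit_krylov_diagonal hd hv)
  have hPP : Pᵀ * P = 1 := (mem_orthogonalGroup_iff' _ _).1 hP
  have hPP' : P * Pᵀ = 1 := (mem_orthogonalGroup_iff _ _).1 hP
  have hcol : (P * T).col 0 = v := by
    rw [← hPT]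
    exact funext (krylov_apply_zero _ v N)
  have hP0 : P.col 0 = v := by
    rw [← hcol]
    exact col_eq_of_mul_isPosUpperTriangular hP hT (fun j _ => Fin.zero_le j) (by rwa [hcol])
  have hsemi : SemiconjBy Pᵀ (diagonal d) (Pᵀ * diagonal d * P) := by
    rw [SemiconjBy, Matrix.mul_assoc _ P, hPP', Matrix.mul_one]
  have hT_eq : T = krylov (Pᵀ * diagonal d * P) (Pi.single 0 1) N :=
    calc T = Pᵀ * krylov (diagonal d) v N := by
          rw [hPT, ← Matrix.mul_assoc, hPP, Matrix.one_mul]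
      _ = krylov (Pᵀ * diagonal d * P) (Pᵀ *ᵥ v) N := mul_krylov hsemi v N
      _ = krylov (Pᵀ * diagonal d * P) (Pi.single 0 1) N := by
          rw [← hP0, ← mulVec_single_one, mulVec_mulVec, hPP, one_mulVec]
  exact ⟨P, hP, hP0, .of_isPosUpperTriangular_krylov (hT_eq ▸ hT)⟩

theorem exists_isJacobi_hasSpectralData (hlam : Function.Injective lam) (hρ : ∀ k, 0 < ρ k)
    (hsum : ∑ k, 1 / ρ k = 1) :
    ∃ A : Matrix (Fin N) (Fin N) ℝ, IsJacobi A ∧ HasSpectralData A lam ρ := by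
  have hv : ∀ k, (√(ρ k))⁻¹ ≠ 0 := fun k => inv_ne_zero (Real.sqrt_pos.2 (hρ k)).ne'
  have hvv : (fun k => (√(ρ k))⁻¹) ⬝ᵥ (fun k => (√(ρ k))⁻¹) = 1 :=
    (inv_sqrt_dotProduct_self fun k => (hρ k).le).trans hsum
  obtain ⟨P, hP, hP0, hhess⟩ := exists_orthogonal_isPosHessenberg hlam hv hvv
  have hsymm : (Pᵀ * diagonal lam * P).IsSymm := by
    rw [IsSymm, transpose_mul, transpose_mul, transpose_transpose, diagonal_transpose,
      Matrix.mul_assoc]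
  have hPA : P * (Pᵀ * diagonal lam * P) = diagonal lam * P := by
    rw [← Matrix.mul_assoc, ← Matrix.mul_assoc, (mem_orthogonalGroup_iff _ _).1 hP, Matrix.one_mul]
  exact ⟨_, isJacobi_iff.2 ⟨hsymm, hhess⟩, .of_mem_orthogonalGroup hP hsymm hPA hρ hP0⟩

theorem existsUnique_isJacobi_hasSpectralData (hlam : Function.Injective lam)
    (hρ : ∀ k, 0 < ρ k) (hsum : ∑ k, 1 / ρ k = 1) :
    ∃! A : Matrix (Fin N) (Fin N) ℝ, IsJacobi A ∧ HasSpectralData A lam ρ :=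
  existsUnique_of_exists_of_unique (exists_isJacobi_hasSpectralData hlam hρ hsum)
    fun _ _ hA hB => hA.1.eq_of_hasSpectralData hB.1 hlam hA.2 hB.2

end SpectralData

/-- existence and uniqueness of a Jacobi matrix with prescribed
spectral data `(λ_k, ρ_k)` (with `λ₁ < … < λ_N`, `ρ_k > 0`, `∑ 1/ρ_k = 1`);
consequently a function `r` is a response function of the system associated with
some Jacobi matrix iff it has the form `r(t) = ∑ (1/ρ_k) S(t, λ_k)` for such data. -/
theorem stmt11 {N : ℕ} (hN : 0 < N) (lam ρ : Fin N → ℝ)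
    (hlam : StrictMono lam) (hρpos : ∀ k, 0 < ρ k) (hρsum : ∑ k, 1 / ρ k = 1) :
    (∃! A : Matrix (Fin N) (Fin N) ℝ, IsJacobi A ∧
      ∃ φ : Fin N → Fin N → ℝ,
        (∀ k, A.mulVec (φ k) = lam k • φ k) ∧
        (∀ k, φ k ⟨0, hN⟩ = 1) ∧
        (∀ k, ∑ i, φ k i * φ k i = ρ k)) ∧
    (∀ r : ℝ → ℝ,
      (∃ (M : ℕ) (hM : 0 < M) (A : Matrix (Fin M) (Fin M) ℝ), IsJacobi A ∧
        ∃ (lam' : Fin M → ℝ) (φ : Fin M → Fin M → ℝ),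
          StrictMono lam' ∧
          (∀ k, A.mulVec (φ k) = lam' k • φ k) ∧
          (∀ k, φ k ⟨0, hM⟩ = 1) ∧
          r = fun t => ∑ k, (1 / ∑ i, φ k i * φ k i) * S t (lam' k)) ↔
      (∃ (M : ℕ) (_ : 0 < M) (lam' ρ' : Fin M → ℝ),
        StrictMono lam' ∧ (∀ k, 0 < ρ' k) ∧ (∑ k, 1 / ρ' k = 1) ∧
        r = fun t => ∑ k, (1 / ρ' k) * S t (lam' k))) := by
  have : NeZero N := ⟨hN.ne'⟩
  refine ⟨existsUnique_isJacobi_hasSpectralData hlam.injective hρpos hρsum, fun r => ⟨?_, ?_⟩⟩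
  · rintro ⟨M, hM, A, hA, lam', φ, hlam', hφ, hφ0, rfl⟩
    have : NeZero M := ⟨hM.ne'⟩
    have hspec : HasSpectralData A lam' fun k => φ k ⬝ᵥ φ k := ⟨φ, hφ, hφ0, fun _ => rfl⟩
    exact ⟨M, hM, lam', _, hlam', hspec.pos,
      hspec.sum_one_div_eq_one (isJacobi_iff.1 hA).1 hlam'.injective, rfl⟩
  · rintro ⟨M, hM, lam', ρ', hlam', hρ', hsum, rfl⟩
    have : NeZero M := ⟨hM.ne'⟩
    obtain ⟨A, hA, φ, hφ, hφ0, hφρ⟩ :=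
      exists_isJacobi_hasSpectralData hlam'.injective hρ' hsum
    refine ⟨M, hM, A, hA, lam', φ, hlam', hφ, hφ0, funext fun t => ?_⟩
    exact Finset.sum_congr rfl fun k _ => by rw [← hφρ k, dotProduct]
end
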